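/- Evaluation of elementary symmetric polynomials at (p,q)-geometric nodes: let n ≥ 1 be a natural number, let 1 ≤ k ≤ n, and let p, q be reals with 0 < q < p. Then φ_{n,k}(p^{n−1}, p^{n−2}q, …, p q^{n−2}, q^{n−1}) = (pq)^{k(k−1)/2} [n choose k]_{p,q}, where the i-th argument is p^{n−i} q^{i−1} for i = 1, …, n. -/

import Mathlib

/-- The (p,q)-integer `[n]_{p,q} = Σ_{j=0}^{n-1} p^{n-1-j} q^j`. -/
noncomputable def pqInt (p q : ℝ) (n : ℕ) : ℝ :=
  ∑ j ∈ Finset.range n, p ^ (n - 1 - j) * q ^ j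

/-- The (p,q)-factorial `[n]_{p,q}! = ∏_{j=1}^{n} [j]_{p,q}`. -/
noncomputable def pqFact (p q : ℝ) : ℕ → ℝ
  | 0 => 1
  | n + 1 => pqFact p q n * pqInt p q (n + 1)

/-- The (p,q)-binomial coefficient `[n choose k]_{p,q}`. -/
noncomputable def pqBinom (p q : ℝ) (n k : ℕ) : ℝ :=
  pqFact p q n / (pqFact p q k * pqFact p q (n - k))

/-- The (p,q)-Bernstein basis function
`B_k^n(t;p,q) = p^{k(k-1)/2 - n(n-1)/2} [n choose k]_{p,q} t^k ∏_{s=0}^{n-k-1} (p^s - q^s t)`. -/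
noncomputable def pqBernstein (p q : ℝ) (n k : ℕ) (t : ℝ) : ℝ :=
  p ^ (k * (k - 1) / 2) / p ^ (n * (n - 1) / 2) * pqBinom p q n k * t ^ k *
    ∏ s ∈ Finset.range (n - k), (p ^ s - q ^ s * t)

/-- The `k`-th elementary symmetric polynomial in `n` variables:
`φ_{n,k}(u_1, …, u_n) = Σ_{1 ≤ i_1 < … < i_k ≤ n} u_{i_1} ⋯ u_{i_k}`. -/
noncomputable def esymmEval (n k : ℕ) (u : Fin n → ℝ) : ℝ :=
  ∑ S ∈ Finset.powersetCard k (Finset.univ : Finset (Fin n)), ∏ i ∈ S, u i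

/-!
Split off the last node `q ^ n` from the `n + 1` nodes; the remaining ones are `p` times the nodes
of size `n`. This gives the Pascal-type recursion
`φ_{n+1,k+1} = p ^ (k+1) φ_{n,k+1} + q ^ n p ^ k φ_{n,k}`, which matches the addition law
`[a + b] = p ^ a [b] + q ^ b [a]` of the `(p,q)`-integers. Multiplying through by `[k]! [n-k]!`
turns the claim into a polynomial identity in `p` and `q`, provable by induction on `n` with no
division.
-/

theorem esymm_cons_succ {R : Type*} [CommSemiring R] (a : R) (s : Multiset R) (k : ℕ) :
    (a ::ₘ s).esymm (k + 1) = s.esymm (k + 1) + a * s.esymm k := by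
  simp only [Multiset.esymm, Multiset.powersetCard_cons, Multiset.map_add, Multiset.sum_add,
    Multiset.map_map, Function.comp_def, Multiset.prod_cons, Multiset.sum_map_mul_left]

section esymmEval

variable {n : ℕ}

theorem esymmEval_eq_multiset_esymm (k : ℕ) (u : Fin n → ℝ) :
    esymmEval n k u = ((Finset.univ : Finset (Fin n)).val.map u).esymm k :=
  (Finset.esymm_map_val u Finset.univ k).symm

theorem esymmEval_zero_right (u : Fin n → ℝ) : esymmEval n 0 u = 1 := by
  simp [esymmEval]

theorem esymmEval_eq_zero_of_lt {k : ℕ} (h : n < k) (u : Fin n → ℝ) : esymmEval n k u = 0 := by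
  rw [esymmEval, Finset.powersetCard_eq_empty.2 (by simpa using h), Finset.sum_empty]

theorem esymmEval_succ_succ (k : ℕ) (u : Fin (n + 1) → ℝ) :
    esymmEval (n + 1) (k + 1) u =
      esymmEval n (k + 1) (fun i => u i.castSucc) +
        u (Fin.last n) * esymmEval n k (fun i => u i.castSucc) := by
  simp only [esymmEval_eq_multiset_esymm, Fin.univ_castSuccEmb, Finset.cons_val, Finset.map_val,
    Multiset.map_cons, Multiset.map_map, Function.comp_def, Fin.coe_castSuccEmb, esymm_cons_succ]

theorem esymmEval_const_mul (k : ℕ) (c : ℝ) (u : Fin n → ℝ) :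
    esymmEval n k (fun i => c * u i) = c ^ k * esymmEval n k u := by
  simpa only [esymmEval_eq_multiset_esymm, smul_eq_mul, Multiset.map_map, Function.comp_def] using
    (Multiset.pow_smul_esymm c k (Finset.univ.val.map u)).symm

end esymmEval

section pqInt

variable (p q : ℝ)

theorem pqInt_zero : pqInt p q 0 = 0 := by
  simp [pqInt]

theorem pqInt_add (a b : ℕ) :
    pqInt p q (a + b) = p ^ a * pqInt p q b + q ^ b * pqInt p q a := by
  simp only [pqInt, add_comm a b, Finset.sum_range_add, Finset.mul_sum]
  congr 1 <;> refine Finset.sum_congr rfl fun j hj => ?_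
  · have hexp : b + a - 1 - j = a + (b - 1 - j) := by
      have := Finset.mem_range.1 hj
      omega
    rw [hexp, pow_add, mul_assoc]
  · have hexp : b + a - 1 - (b + j) = a - 1 - j := by omega
    rw [hexp, pow_add, mul_left_comm]

theorem pqFact_zero : pqFact p q 0 = 1 := rfl

theorem pqFact_succ (n : ℕ) : pqFact p q (n + 1) = pqFact p q n * pqInt p q (n + 1) := rfl

variable {p q}

theorem pqInt_pos (hp : 0 < p) (hq : 0 < q) {n : ℕ} (hn : n ≠ 0) : 0 < pqInt p q n :=
  Finset.sum_pos (fun _ _ => by positivity) (Finset.nonempty_range_iff.2 hn)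

theorem pqFact_pos (hp : 0 < p) (hq : 0 < q) (n : ℕ) : 0 < pqFact p q n := by
  induction n with
  | zero => exact one_pos
  | succ n ih => exact mul_pos ih (pqInt_pos hp hq n.succ_ne_zero)

end pqInt

section pqNode

/-- The `(p,q)`-geometric nodes `p^{n-1}, p^{n-2} q, …, q^{n-1}`, indexed from `0`. -/
def pqNode (p q : ℝ) (n : ℕ) (i : Fin n) : ℝ :=
  p ^ (n - 1 - (i : ℕ)) * q ^ (i : ℕ)

variable (p q : ℝ)

theorem pqNode_last (n : ℕ) : pqNode p q (n + 1) (Fin.last n) = q ^ n := by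
  simp [pqNode]

theorem pqNode_castSucc {n : ℕ} (i : Fin n) :
    pqNode p q (n + 1) i.castSucc = p * pqNode p q n i := by
  have hexp : n + 1 - 1 - (i : ℕ) = n - 1 - i + 1 := by omega
  rw [pqNode, pqNode, Fin.val_castSucc, hexp, pow_succ', mul_assoc]

theorem esymmEval_pqNode_succ_succ (n k : ℕ) :
    esymmEval (n + 1) (k + 1) (pqNode p q (n + 1)) =
      p ^ (k + 1) * esymmEval n (k + 1) (pqNode p q n) +
        q ^ n * (p ^ k * esymmEval n k (pqNode p q n)) := by
  simp only [esymmEval_succ_succ, pqNode_castSucc, pqNode_last, esymmEval_const_mul]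

theorem esymmEval_pqNode_mul_pqFact (n k m : ℕ) (h : k + m = n) :
    esymmEval n k (pqNode p q n) * (pqFact p q k * pqFact p q m) =
      (p * q) ^ (k * (k - 1) / 2) * pqFact p q n := by
  induction n generalizing k m with
  | zero =>
    obtain ⟨rfl, rfl⟩ : k = 0 ∧ m = 0 := by omega
    simp [esymmEval_zero_right, pqFact_zero]
  | succ n ih =>
    rcases k with _ | k
    · obtain rfl : m = n + 1 := by omega
      simp [esymmEval_zero_right, pqFact_zero]
    obtain rfl : n = k + m := by omega
    have without_last : esymmEval (k + m) (k + 1) (pqNode p q (k + m)) *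
        (pqFact p q (k + 1) * pqFact p q m) =
          (p * q) ^ (k * (k - 1) / 2 + k) * pqFact p q (k + m) * pqInt p q m := by
      rcases m with _ | m
      · rw [esymmEval_eq_zero_of_lt (by omega), pqInt_zero, zero_mul, mul_zero]
      · rw [← Nat.triangle_succ, ← ih (k + 1) m (by omega), pqFact_succ p q m]
        ring
    have with_last : esymmEval (k + m) k (pqNode p q (k + m)) *
        (pqFact p q (k + 1) * pqFact p q m) =
          (p * q) ^ (k * (k - 1) / 2) * pqFact p q (k + m) * pqInt p q (k + 1) := by
      rw [← ih k m rfl, pqFact_succ]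
      ring
    have fact_succ : pqFact p q (k + m + 1) =
        pqFact p q (k + m) * (p ^ (k + 1) * pqInt p q m + q ^ m * pqInt p q (k + 1)) := by
      rw [pqFact_succ, ← pqInt_add, Nat.add_right_comm]
    rw [esymmEval_pqNode_succ_succ, fact_succ, Nat.triangle_succ]
    linear_combination p ^ (k + 1) * without_last + q ^ (k + m) * p ^ k * with_last

end pqNode

theorem esymmEval_pq_nodes_general (n k : ℕ) (hk : k ≤ n) (p q : ℝ)
    (hfact_k : pqFact p q k ≠ 0) (hfact_sub : pqFact p q (n - k) ≠ 0) :
    esymmEval n k (fun i => p ^ (n - 1 - (i : ℕ)) * q ^ (i : ℕ)) =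
      (p * q) ^ (k * (k - 1) / 2) * pqBinom p q n k := by
  rw [pqBinom, ← mul_div_assoc, eq_div_iff (mul_ne_zero hfact_k hfact_sub)]
  exact esymmEval_pqNode_mul_pqFact p q n k (n - k) (Nat.add_sub_cancel' hk)

/-- evaluation of elementary symmetric polynomials at (p,q)-geometric nodes:
`φ_{n,k}(p^{n-1}, p^{n-2}q, …, q^{n-1}) = (pq)^{k(k-1)/2} [n choose k]_{p,q}`. -/
theorem esymmEval_pq_nodes (n k : ℕ) (hn : 1 ≤ n) (hk1 : 1 ≤ k) (hk : k ≤ n)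
    (p q : ℝ) (h0 : 0 < q) (hqp : q < p) :
    esymmEval n k (fun i => p ^ (n - 1 - (i : ℕ)) * q ^ (i : ℕ)) =
      (p * q) ^ (k * (k - 1) / 2) * pqBinom p q n k := by
  have hp : 0 < p := h0.trans hqp
  exact esymmEval_pq_nodes_general n k hk p q (pqFact_pos hp h0 k).ne' (pqFact_pos hp h0 _).ne'
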